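/- With the same reduced dynamic programming system and U concave (and nondecreasing), for every k the map r ↦ w_k(r, μ) is concave on [q,1]: for r_1, r_2 ∈ [q,1] and λ ∈ (0,1), w_k(λr_1 + (1−λ)r_2, μ) ≥ λ w_k(r_1,μ) + (1−λ) w_k(r_2,μ). -/

import Mathlib

open MeasureTheory ProbabilityTheory

section ReducedDynamicProgramming

variable {d : ℕ}

/-- The portfolios with nonnegative weights of total at most one. -/
def portfolioSet (d : ℕ) : Set (Fin d → ℝ) := {s | (∀ i, 0 ≤ s i) ∧ ∑ i, s i ≤ 1}

/-- The gross return of the portfolio `s` under the log-returns `x`. -/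
noncomputable def growth (s x : Fin d → ℝ) : ℝ := 1 + ∑ i, s i * (Real.exp (x i) - 1)

/-- The unnormalized posterior of `μ` after observing `x`. -/
noncomputable def posteriorMeasure (g : (Fin d → ℝ) → ℝ) (μ : Measure (Fin d → ℝ)) (x : Fin d → ℝ) :
    Measure (Fin d → ℝ) :=
  μ.withDensity fun b => ENNReal.ofReal (g (x - b) / g x)

/-- The ratio after one step, started from `r` with the share `s` of the excess over `q`
invested. -/
noncomputable def nextRatio (q r : ℝ) (s x : Fin d → ℝ) : ℝ := min 1 (q + (r - q) * growth s x)

/-- The expected continuation value `F` when the share `s` is invested. -/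
noncomputable def continuationValue (g : (Fin d → ℝ) → ℝ) (ν : Measure (Fin d → ℝ)) (q : ℝ)
    (F : ℝ → Measure (Fin d → ℝ) → ℝ) (r : ℝ) (s : Fin d → ℝ) (μ : Measure (Fin d → ℝ)) : ℝ :=
  ∫ x, F (nextRatio q r s x) (posteriorMeasure g μ x) ∂ν

open Classical in
/-- One step of the dynamic programming recursion. -/
noncomputable def bellman (g : (Fin d → ℝ) → ℝ) (ν : Measure (Fin d → ℝ)) (q : ℝ)
    (F : ℝ → Measure (Fin d → ℝ) → ℝ) (r : ℝ) (μ : Measure (Fin d → ℝ)) : ℝ :=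
  if IsFiniteMeasure μ then
    sSup ((fun s => continuationValue g ν q F r s μ) '' portfolioSet d) else 0

/-- The regularity of a value function that is preserved by the dynamic programming recursion. -/
structure IsRegularValue (q : ℝ) (F : ℝ → Measure (Fin d → ℝ) → ℝ) : Prop where
  measurable_kernel : ∀ (Y : Type) [MeasurableSpace Y] (κ : Kernel Y (Fin d → ℝ))
    [IsSFiniteKernel κ] (r : ℝ), Measurable fun y => F r (κ y)
  continuous_ratio : ∀ μ, Continuous fun r => F r μ
  exists_bound : ∃ C, 0 ≤ C ∧ ∀ r μ, |F r μ| ≤ C * (μ Set.univ).toReal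
  monotoneOn_ratio : ∀ μ, MonotoneOn (fun r => F r μ) (Set.Ici q)
  concaveOn_ratio : ∀ μ, ConcaveOn ℝ (Set.Ici q) fun r => F r μ

lemma zero_mem_portfolioSet : (0 : Fin d → ℝ) ∈ portfolioSet d := by
  simp [portfolioSet]

lemma isCompact_portfolioSet : IsCompact (portfolioSet d) := by
  refine IsCompact.of_isClosed_subset (isCompact_Icc (a := (0 : Fin d → ℝ)) (b := 1)) ?_ ?_
  · have h0 : IsClosed {s : Fin d → ℝ | ∀ i, 0 ≤ s i} := isClosed_Ici (a := (0 : Fin d → ℝ))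
    have h1 : IsClosed {s : Fin d → ℝ | ∑ i, s i ≤ 1} :=
      isClosed_le (by fun_prop) continuous_const
    exact h0.inter h1
  · rintro s ⟨h0, h1⟩
    exact ⟨h0, fun i => (Finset.single_le_sum (fun j _ => h0 j) (Finset.mem_univ i)).trans h1⟩

lemma growth_nonneg {s : Fin d → ℝ} (hs : s ∈ portfolioSet d) (x : Fin d → ℝ) :
    0 ≤ growth s x := by
  have h : ∑ i, s i * (-1) ≤ ∑ i, s i * (Real.exp (x i) - 1) :=
    Finset.sum_le_sum fun i _ =>
      mul_le_mul_of_nonneg_left (by linarith [Real.exp_pos (x i)]) (hs.1 i)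
  rw [← Finset.sum_mul] at h
  have := hs.2
  unfold growth
  linarith

lemma le_nextRatio {q r : ℝ} (hq : q ≤ 1) (hr : q ≤ r) {s : Fin d → ℝ}
    (hs : s ∈ portfolioSet d) (x : Fin d → ℝ) : q ≤ nextRatio q r s x :=
  le_min hq (le_add_of_nonneg_right (mul_nonneg (sub_nonneg.2 hr) (growth_nonneg hs x)))

lemma measurable_nextRatio (q r : ℝ) (s : Fin d → ℝ) : Measurable (nextRatio q r s) := by
  unfold nextRatio growth
  fun_prop

lemma continuous_nextRatio (q : ℝ) (x : Fin d → ℝ) :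
    Continuous fun p : ℝ × (Fin d → ℝ) => nextRatio q p.1 p.2 x := by
  unfold nextRatio growth
  fun_prop

/-- Portfolios with prescribed excess-weighted mixture. -/
lemma exists_portfolio_mix {q r₁ r₂ a b : ℝ} (h₁ : q ≤ r₁) (h₂ : q ≤ r₂) (ha : 0 ≤ a)
    (hb : 0 ≤ b) (hab : a + b = 1) {s₁ s₂ : Fin d → ℝ} (hs₁ : s₁ ∈ portfolioSet d)
    (hs₂ : s₂ ∈ portfolioSet d) :
    ∃ s ∈ portfolioSet d, ∀ i, (a * r₁ + b * r₂ - q) * s i =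
      a * (r₁ - q) * s₁ i + b * (r₂ - q) * s₂ i := by
  have e₁ : 0 ≤ a * (r₁ - q) := mul_nonneg ha (sub_nonneg.2 h₁)
  have e₂ : 0 ≤ b * (r₂ - q) := mul_nonneg hb (sub_nonneg.2 h₂)
  have e : a * r₁ + b * r₂ - q = a * (r₁ - q) + b * (r₂ - q) := by
    linear_combination q * hab
  rw [e]
  rcases (add_nonneg e₁ e₂).eq_or_lt with h | h
  · refine ⟨s₁, hs₁, fun i => ?_⟩
    have z₁ : a * (r₁ - q) = 0 := by linarith
    have z₂ : b * (r₂ - q) = 0 := by linarith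
    simp [z₁, z₂]
  · refine ⟨fun i => (a * (r₁ - q) * s₁ i + b * (r₂ - q) * s₂ i) /
      (a * (r₁ - q) + b * (r₂ - q)), ⟨fun i => ?_, ?_⟩, fun i => ?_⟩
    · have := hs₁.1 i
      have := hs₂.1 i
      positivity
    · rw [← Finset.sum_div, div_le_one h, Finset.sum_add_distrib, ← Finset.mul_sum,
        ← Finset.mul_sum]
      exact add_le_add (mul_le_of_le_one_right e₁ hs₁.2) (mul_le_of_le_one_right e₂ hs₂.2)
    · field_simp

lemma excess_mul_growth (c : ℝ) (s x : Fin d → ℝ) :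
    c * growth s x = c + ∑ i, (c * s i) * (Real.exp (x i) - 1) := by
  simp only [growth, mul_add, Finset.mul_sum, mul_one, mul_assoc]

lemma concaveOn_min_one_comp {q : ℝ} (hq : q ≤ 1) {f : ℝ → ℝ} (hm : MonotoneOn f (Set.Ici q))
    (hc : ConcaveOn ℝ (Set.Ici q) f) : ConcaveOn ℝ (Set.Ici q) fun t => f (min 1 t) := by
  refine ⟨convex_Ici q, fun x hx y hy a b ha hb hab => ?_⟩
  have hx' : min 1 x ∈ Set.Ici q := le_min hq hx
  have hy' : min 1 y ∈ Set.Ici q := le_min hq hy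
  refine (hc.2 hx' hy' ha hb hab).trans (hm (convex_Ici q hx' hy' ha hb hab)
    (le_min hq (convex_Ici q hx hy ha hb hab)) (le_min ?_ ?_))
  · have := mul_le_mul_of_nonneg_left (min_le_left 1 x) ha
    have := mul_le_mul_of_nonneg_left (min_le_left 1 y) hb
    simp only [smul_eq_mul]
    linarith
  · simp only [smul_eq_mul]
    gcongr <;> exact min_le_right _ _

/-- A supremum over a compact set is a supremum over a dense sequence. -/
lemma iSup_denseSeq {S : Type*} [TopologicalSpace S] [CompactSpace S]
    [TopologicalSpace.SeparableSpace S] [Nonempty S] {φ : S → ℝ} (hφ : Continuous φ) :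
    ⨆ n, φ (TopologicalSpace.denseSeq S n) = ⨆ s, φ s := by
  have hb : BddAbove (Set.range φ) := (isCompact_range hφ).bddAbove
  have hb' : BddAbove (Set.range fun n => φ (TopologicalSpace.denseSeq S n)) :=
    hb.mono (Set.range_comp_subset_range _ φ)
  refine le_antisymm (ciSup_le fun n => le_ciSup hb _) (ciSup_le fun s => ?_)
  exact (TopologicalSpace.denseRange_denseSeq S).induction_on s
    (isClosed_le hφ continuous_const) fun n => le_ciSup hb' n

lemma measurable_posterior_density {g : (Fin d → ℝ) → ℝ} (hg_meas : Measurable g) :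
    Measurable (Function.uncurry fun x b : Fin d → ℝ => ENNReal.ofReal (g (x - b) / g x)) := by
  unfold Function.uncurry
  fun_prop

lemma lintegral_posterior {g : (Fin d → ℝ) → ℝ} (hg : ∀ r, 0 < g r) (hg_meas : Measurable g)
    {ν : Measure (Fin d → ℝ)} [IsProbabilityMeasure ν]
    (hν : ν = (volume : Measure (Fin d → ℝ)).withDensity fun r => ENNReal.ofReal (g r))
    (μ : Measure (Fin d → ℝ)) [IsFiniteMeasure μ] :
    ∫⁻ x, posteriorMeasure g μ x Set.univ ∂ν = μ Set.univ := by
  have hm : Measurable fun x => ∫⁻ b, ENNReal.ofReal (g (x - b) / g x) ∂μ :=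
    (measurable_posterior_density hg_meas).lintegral_prod_right'
  have h1 : ∫⁻ x, ENNReal.ofReal (g x) = 1 := by
    rw [← measure_univ (μ := ν), hν, withDensity_apply _ MeasurableSet.univ, setLIntegral_univ]
  simp only [posteriorMeasure, withDensity_apply _ MeasurableSet.univ, setLIntegral_univ]
  rw [hν, lintegral_withDensity_eq_lintegral_mul _ (by fun_prop) hm]
  simp only [Pi.mul_apply]
  calc ∫⁻ x, ENNReal.ofReal (g x) * ∫⁻ b, ENNReal.ofReal (g (x - b) / g x) ∂μ
      = ∫⁻ x, ∫⁻ b, ENNReal.ofReal (g (x - b)) ∂μ := by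
        refine lintegral_congr fun x => ?_
        rw [← lintegral_const_mul _ (by fun_prop)]
        refine lintegral_congr fun b => ?_
        rw [← ENNReal.ofReal_mul (hg x).le, mul_div_cancel₀ _ (hg x).ne']
    _ = ∫⁻ b, (∫⁻ x, ENNReal.ofReal (g (x - b))) ∂μ :=
        lintegral_lintegral_swap (by unfold Function.uncurry; fun_prop)
    _ = μ Set.univ := by
        simp only [lintegral_sub_right_eq_self (fun x => ENNReal.ofReal (g x)), h1, lintegral_one]

lemma measurable_posterior_univ {g : (Fin d → ℝ) → ℝ} (hg_meas : Measurable g)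
    (μ : Measure (Fin d → ℝ)) [IsFiniteMeasure μ] :
    Measurable fun x => posteriorMeasure g μ x Set.univ := by
  simp only [posteriorMeasure, withDensity_apply _ MeasurableSet.univ, setLIntegral_univ]
  exact (measurable_posterior_density hg_meas).lintegral_prod_right'

lemma ae_isFiniteMeasure_posterior {g : (Fin d → ℝ) → ℝ} (hg : ∀ r, 0 < g r)
    (hg_meas : Measurable g) {ν : Measure (Fin d → ℝ)} [IsProbabilityMeasure ν]
    (hν : ν = (volume : Measure (Fin d → ℝ)).withDensity fun r => ENNReal.ofReal (g r))
    (μ : Measure (Fin d → ℝ)) [IsFiniteMeasure μ] :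
    ∀ᵐ x ∂ν, IsFiniteMeasure (posteriorMeasure g μ x) := by
  filter_upwards [ae_lt_top (measurable_posterior_univ hg_meas μ)
    (by rw [lintegral_posterior hg hg_meas hν]; exact measure_ne_top _ _)] with x hx
  exact ⟨hx⟩

lemma integrable_posterior {g : (Fin d → ℝ) → ℝ} (hg : ∀ r, 0 < g r)
    (hg_meas : Measurable g) {ν : Measure (Fin d → ℝ)} [IsProbabilityMeasure ν]
    (hν : ν = (volume : Measure (Fin d → ℝ)).withDensity fun r => ENNReal.ofReal (g r))
    (μ : Measure (Fin d → ℝ)) [IsFiniteMeasure μ] :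
    Integrable (fun x => (posteriorMeasure g μ x Set.univ).toReal) ν :=
  integrable_toReal_of_lintegral_ne_top (measurable_posterior_univ hg_meas μ).aemeasurable
    (by rw [lintegral_posterior hg hg_meas hν]; exact measure_ne_top _ _)

lemma integral_posterior {g : (Fin d → ℝ) → ℝ} (hg : ∀ r, 0 < g r)
    (hg_meas : Measurable g) {ν : Measure (Fin d → ℝ)} [IsProbabilityMeasure ν]
    (hν : ν = (volume : Measure (Fin d → ℝ)).withDensity fun r => ENNReal.ofReal (g r))
    (μ : Measure (Fin d → ℝ)) [IsFiniteMeasure μ] :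
    ∫ x, (posteriorMeasure g μ x Set.univ).toReal ∂ν = (μ Set.univ).toReal := by
  have h := lintegral_posterior hg hg_meas hν μ
  rw [integral_toReal (measurable_posterior_univ hg_meas μ).aemeasurable
    (ae_lt_top (measurable_posterior_univ hg_meas μ) (h ▸ measure_ne_top _ _)), h]

namespace IsRegularValue

variable {q : ℝ} {F : ℝ → Measure (Fin d → ℝ) → ℝ} {g : (Fin d → ℝ) → ℝ}
  {ν : Measure (Fin d → ℝ)}

lemma measurable_integrand (hF : IsRegularValue q F) (hg_meas : Measurable g) {Y : Type}
    [MeasurableSpace Y] (κ : Kernel Y (Fin d → ℝ)) [IsSFiniteKernel κ] (r : ℝ)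
    (s : Fin d → ℝ) :
    Measurable fun p : Y × (Fin d → ℝ) =>
      F (nextRatio q r s p.2) (posteriorMeasure g (κ p.1) p.2) := by
  set f : Y × (Fin d → ℝ) → (Fin d → ℝ) → ENNReal :=
    fun p b => ENNReal.ofReal (g (p.2 - b) / g p.2)
  have hfm : Measurable (Function.uncurry f) := by
    unfold Function.uncurry
    fun_prop
  let η := Kernel.withDensity (Kernel.prodMkRight (Fin d → ℝ) κ) f
  have : IsSFiniteKernel η := Kernel.IsSFiniteKernel.withDensity _ fun _ _ => ENNReal.ofReal_ne_top
  have hη : ∀ p, η p = posteriorMeasure g (κ p.1) p.2 := fun p => by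
    simp only [η]
    rw [Kernel.withDensity_apply _ hfm, Kernel.prodMkRight_apply]
    rfl
  have h := measurable_uncurry_of_continuous_of_measurable (u := fun r p => F r (η p))
    (fun p => hF.continuous_ratio (η p)) fun r => hF.measurable_kernel _ η r
  simp only [← hη]
  exact h.comp (((measurable_nextRatio q r s).comp measurable_snd).prodMk measurable_id)

lemma integrable_integrand (hF : IsRegularValue q F) (hg : ∀ r, 0 < g r)
    (hg_meas : Measurable g) [IsProbabilityMeasure ν]
    (hν : ν = (volume : Measure (Fin d → ℝ)).withDensity fun r => ENNReal.ofReal (g r))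
    (μ : Measure (Fin d → ℝ)) [IsFiniteMeasure μ] (r : ℝ) (s : Fin d → ℝ) :
    Integrable (fun x => F (nextRatio q r s x) (posteriorMeasure g μ x)) ν := by
  obtain ⟨C, -, hC⟩ := hF.exists_bound
  refine ((integrable_posterior hg hg_meas hν μ).const_mul C).mono' ?_
    (ae_of_all _ fun x => hC _ _)
  exact ((hF.measurable_integrand hg_meas (Kernel.const Unit μ) r s).comp
    (measurable_prodMk_left (x := ()))).aestronglyMeasurable

lemma continuous_continuationValue (hF : IsRegularValue q F) (hg : ∀ r, 0 < g r)
    (hg_meas : Measurable g) [IsProbabilityMeasure ν]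
    (hν : ν = (volume : Measure (Fin d → ℝ)).withDensity fun r => ENNReal.ofReal (g r))
    (μ : Measure (Fin d → ℝ)) [IsFiniteMeasure μ] :
    Continuous fun p : ℝ × (Fin d → ℝ) => continuationValue g ν q F p.1 p.2 μ := by
  obtain ⟨C, -, hC⟩ := hF.exists_bound
  exact continuous_of_dominated
    (fun p => (hF.integrable_integrand hg hg_meas hν μ p.1 p.2).aestronglyMeasurable)
    (fun p => ae_of_all _ fun x => hC _ _)
    ((integrable_posterior hg hg_meas hν μ).const_mul C)
    (ae_of_all _ fun x => (hF.continuous_ratio _).comp (continuous_nextRatio q x))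

lemma bddAbove_continuationValue (hF : IsRegularValue q F) (hg : ∀ r, 0 < g r)
    (hg_meas : Measurable g) [IsProbabilityMeasure ν]
    (hν : ν = (volume : Measure (Fin d → ℝ)).withDensity fun r => ENNReal.ofReal (g r))
    (μ : Measure (Fin d → ℝ)) [IsFiniteMeasure μ] (r : ℝ) :
    BddAbove ((fun s => continuationValue g ν q F r s μ) '' portfolioSet d) :=
  (isCompact_portfolioSet.image ((hF.continuous_continuationValue hg hg_meas hν μ).comp
    (Continuous.prodMk_right r))).bddAbove

lemma abs_continuationValue_le (hF : IsRegularValue q F) (hg : ∀ r, 0 < g r)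
    (hg_meas : Measurable g) [IsProbabilityMeasure ν]
    (hν : ν = (volume : Measure (Fin d → ℝ)).withDensity fun r => ENNReal.ofReal (g r))
    {C : ℝ} (hC : ∀ r μ, |F r μ| ≤ C * (μ Set.univ).toReal)
    (μ : Measure (Fin d → ℝ)) [IsFiniteMeasure μ] (r : ℝ) (s : Fin d → ℝ) :
    |continuationValue g ν q F r s μ| ≤ C * (μ Set.univ).toReal := by
  rw [← integral_posterior hg hg_meas hν μ, ← integral_const_mul]
  exact (abs_integral_le_integral_abs).trans
    (integral_mono (hF.integrable_integrand hg hg_meas hν μ r s).abs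
      ((integrable_posterior hg hg_meas hν μ).const_mul C) fun x => hC _ _)

lemma continuationValue_mono (hF : IsRegularValue q F) (hq : q ≤ 1) (hg : ∀ r, 0 < g r)
    (hg_meas : Measurable g) [IsProbabilityMeasure ν]
    (hν : ν = (volume : Measure (Fin d → ℝ)).withDensity fun r => ENNReal.ofReal (g r))
    (μ : Measure (Fin d → ℝ)) [IsFiniteMeasure μ] {r r' : ℝ} (hr : q ≤ r) (hrr : r ≤ r')
    {s : Fin d → ℝ} (hs : s ∈ portfolioSet d) :
    continuationValue g ν q F r s μ ≤ continuationValue g ν q F r' s μ := by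
  refine integral_mono (hF.integrable_integrand hg hg_meas hν μ r s)
    (hF.integrable_integrand hg hg_meas hν μ r' s) fun x => ?_
  refine hF.monotoneOn_ratio _ (le_nextRatio hq hr hs x) (le_nextRatio hq (hr.trans hrr) hs x) ?_
  have := growth_nonneg hs x
  unfold nextRatio
  gcongr

lemma exists_continuationValue_ge (hF : IsRegularValue q F) (hq : q ≤ 1) (hg : ∀ r, 0 < g r)
    (hg_meas : Measurable g) [IsProbabilityMeasure ν]
    (hν : ν = (volume : Measure (Fin d → ℝ)).withDensity fun r => ENNReal.ofReal (g r))
    (μ : Measure (Fin d → ℝ)) [IsFiniteMeasure μ] {r₁ r₂ a b : ℝ} (h₁ : q ≤ r₁) (h₂ : q ≤ r₂)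
    (ha : 0 ≤ a) (hb : 0 ≤ b) (hab : a + b = 1) {s₁ s₂ : Fin d → ℝ}
    (hs₁ : s₁ ∈ portfolioSet d) (hs₂ : s₂ ∈ portfolioSet d) :
    ∃ s ∈ portfolioSet d,
      a * continuationValue g ν q F r₁ s₁ μ + b * continuationValue g ν q F r₂ s₂ μ ≤
        continuationValue g ν q F (a * r₁ + b * r₂) s μ := by
  obtain ⟨s, hs, hmix⟩ := exists_portfolio_mix h₁ h₂ ha hb hab hs₁ hs₂
  refine ⟨s, hs, ?_⟩
  have i₁ := (hF.integrable_integrand hg hg_meas hν μ r₁ s₁).const_mul a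
  have i₂ := (hF.integrable_integrand hg hg_meas hν μ r₂ s₂).const_mul b
  unfold continuationValue
  rw [← integral_const_mul, ← integral_const_mul, ← integral_add i₁ i₂]
  refine integral_mono (i₁.add i₂) (hF.integrable_integrand hg hg_meas hν μ _ s) fun x => ?_
  have hmem : ∀ {r : ℝ} {t : Fin d → ℝ}, q ≤ r → t ∈ portfolioSet d →
      q + (r - q) * growth t x ∈ Set.Ici q := fun hr ht =>
    le_add_of_nonneg_right (mul_nonneg (sub_nonneg.2 hr) (growth_nonneg ht x))
  have key : q + (a * r₁ + b * r₂ - q) * growth s x =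
      a * (q + (r₁ - q) * growth s₁ x) + b * (q + (r₂ - q) * growth s₂ x) := by
    have : ∑ i, ((a * r₁ + b * r₂ - q) * s i) * (Real.exp (x i) - 1) =
        a * ∑ i, ((r₁ - q) * s₁ i) * (Real.exp (x i) - 1) +
        b * ∑ i, ((r₂ - q) * s₂ i) * (Real.exp (x i) - 1) := by
      rw [Finset.mul_sum, Finset.mul_sum, ← Finset.sum_add_distrib]
      refine Finset.sum_congr rfl fun i _ => ?_
      rw [hmix i]
      ring
    simp only [excess_mul_growth, this]
    ring
  have := (concaveOn_min_one_comp hq (hF.monotoneOn_ratio (posteriorMeasure g μ x))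
    (hF.concaveOn_ratio (posteriorMeasure g μ x))).2 (hmem h₁ hs₁) (hmem h₂ hs₂) ha hb hab
  simp only [smul_eq_mul, ← key] at this
  exact this

/-- The dynamic programming step preserves regularity. -/
lemma bellman (hF : IsRegularValue q F) (hq : q ≤ 1) (hg : ∀ r, 0 < g r)
    (hg_meas : Measurable g) [IsProbabilityMeasure ν]
    (hν : ν = (volume : Measure (Fin d → ℝ)).withDensity fun r => ENNReal.ofReal (g r)) :
    IsRegularValue q (bellman g ν q F) where
  measurable_kernel Y _ κ _ r := by
    have : CompactSpace (portfolioSet d) := isCompact_iff_compactSpace.1 isCompact_portfolioSet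
    have : Nonempty (portfolioSet d) := ⟨⟨0, zero_mem_portfolioSet⟩⟩
    have hset : MeasurableSet {y | IsFiniteMeasure (κ y)} := by
      simp only [isFiniteMeasure_iff]
      exact measurableSet_lt (κ.measurable_coe MeasurableSet.univ) measurable_const
    have hmeas : ∀ s, Measurable fun y => continuationValue g ν q F r s (κ y) := fun s =>
      (hF.measurable_integrand hg_meas κ r s).stronglyMeasurable.integral_prod_right'.measurable
    have heq : (fun y => _root_.bellman g ν q F r (κ y)) =
        {y | IsFiniteMeasure (κ y)}.indicator fun y => ⨆ n, continuationValue g ν q F r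
          (TopologicalSpace.denseSeq (portfolioSet d) n : portfolioSet d) (κ y) := by
      funext y
      by_cases hy : IsFiniteMeasure (κ y)
      · rw [Set.indicator_of_mem (by exact hy), _root_.bellman, if_pos hy, sSup_image']
        exact (iSup_denseSeq ((hF.continuous_continuationValue hg hg_meas hν (κ y)).comp
          ((Continuous.prodMk_right r).comp continuous_subtype_val))).symm
      · rw [Set.indicator_of_notMem (by exact hy), _root_.bellman, if_neg hy]
    rw [heq]
    refine Measurable.indicator ?_ hset
    exact Measurable.iSup fun n => hmeas _
  continuous_ratio μ := by
    by_cases hμ : IsFiniteMeasure μ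
    · simp only [_root_.bellman, if_pos hμ]
      exact isCompact_portfolioSet.continuous_sSup
        (hF.continuous_continuationValue hg hg_meas hν μ)
    · simp only [_root_.bellman, if_neg hμ]
      exact continuous_const
  exists_bound := by
    obtain ⟨C, hC0, hC⟩ := hF.exists_bound
    refine ⟨C, hC0, fun r μ => ?_⟩
    by_cases hμ : IsFiniteMeasure μ
    · simp only [_root_.bellman, if_pos hμ]
      have hle := fun s => abs_le.1 (hF.abs_continuationValue_le hg hg_meas hν hC μ r s)
      refine abs_le.2 ⟨(hle 0).1.trans (le_csSup
        (hF.bddAbove_continuationValue hg hg_meas hν μ r) ⟨0, zero_mem_portfolioSet, rfl⟩),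
        csSup_le ⟨_, 0, zero_mem_portfolioSet, rfl⟩ ?_⟩
      rintro _ ⟨s, -, rfl⟩
      exact (hle s).2
    · simp only [_root_.bellman, if_neg hμ, abs_zero]
      positivity
  monotoneOn_ratio μ := by
    by_cases hμ : IsFiniteMeasure μ
    · simp only [_root_.bellman, if_pos hμ]
      intro r hr r' _ hrr
      refine csSup_le ⟨_, 0, zero_mem_portfolioSet, rfl⟩ ?_
      rintro _ ⟨s, hs, rfl⟩
      exact (hF.continuationValue_mono hq hg hg_meas hν μ hr hrr hs).trans
        (le_csSup (hF.bddAbove_continuationValue hg hg_meas hν μ r') ⟨s, hs, rfl⟩)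
    · simp only [_root_.bellman, if_neg hμ]
      exact monotoneOn_const
  concaveOn_ratio μ := by
    by_cases hμ : IsFiniteMeasure μ
    · simp only [_root_.bellman, if_pos hμ]
      refine ⟨convex_Ici q, fun r₁ h₁ r₂ h₂ a b ha hb hab => ?_⟩
      have hmax : ∀ r, ∃ s ∈ portfolioSet d,
          sSup ((fun s => continuationValue g ν q F r s μ) '' portfolioSet d) =
            continuationValue g ν q F r s μ := fun r =>
        isCompact_portfolioSet.exists_sSup_image_eq ⟨0, zero_mem_portfolioSet⟩
          ((hF.continuous_continuationValue hg hg_meas hν μ).comp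
            (Continuous.prodMk_right r)).continuousOn
      obtain ⟨s₁, hs₁, e₁⟩ := hmax r₁
      obtain ⟨s₂, hs₂, e₂⟩ := hmax r₂
      obtain ⟨s, hs, hle⟩ := hF.exists_continuationValue_ge hq hg hg_meas hν μ h₁ h₂ ha hb hab
        hs₁ hs₂
      simp only [smul_eq_mul, e₁, e₂]
      exact hle.trans
        (le_csSup (hF.bddAbove_continuationValue hg hg_meas hν μ _) ⟨s, hs, rfl⟩)
    · simp only [_root_.bellman, if_neg hμ]
      exact concaveOn_const 0 (convex_Ici q)

end IsRegularValue

/-- The terminal value function, with the ratio clamped to `[q, 1]`, is regular. -/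
lemma isRegularValue_terminal {q : ℝ} (hq : q ∈ Set.Ioo (0 : ℝ) 1) {U : ℝ → ℝ}
    (hU : MonotoneOn U (Set.Ioi (0 : ℝ))) (hUconc : ConcaveOn ℝ (Set.Ioi (0 : ℝ)) U) :
    IsRegularValue (d := d) q fun r μ => U (max q (min 1 r)) * (μ Set.univ).toReal := by
  have hpos : ∀ r, max q (min 1 r) ∈ Set.Ioi (0 : ℝ) := fun r => lt_max_of_lt_left hq.1
  have hmono : Monotone fun r => U (max q (min 1 r)) := fun r r' h =>
    hU (hpos r) (hpos r') (max_le_max le_rfl (min_le_min le_rfl h))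
  have hsub : Set.Ici q ⊆ Set.Ioi 0 := fun x hx => hq.1.trans_le hx
  have hconc : ConcaveOn ℝ (Set.Ici q) fun r => U (max q (min 1 r)) :=
    (concaveOn_min_one_comp hq.2.le (hU.mono hsub) (hUconc.subset hsub (convex_Ici q))).congr
      fun r hr => by
        simp only
        rw [max_eq_right (le_min hq.2.le hr)]
  refine ⟨fun Y _ κ _ r => ?_, fun μ => ?_, ?_, fun μ => ?_, fun μ => ?_⟩
  · exact (κ.measurable_coe MeasurableSet.univ).ennreal_toReal.const_mul _
  · exact ((hUconc.continuousOn isOpen_Ioi).comp_continuous (by fun_prop) hpos).mul_const _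
  · refine ⟨max |U q| |U 1|, by positivity, fun r μ => ?_⟩
    rw [abs_mul, abs_of_nonneg (ENNReal.toReal_nonneg (a := μ Set.univ))]
    refine mul_le_mul_of_nonneg_right ?_ ENNReal.toReal_nonneg
    exact abs_le_max_abs_abs (hU hq.1 (hpos r) (le_max_left _ _))
      (hU (hpos r) (Set.mem_Ioi.2 one_pos) (max_le hq.2.le (min_le_left _ _)))
  · exact fun r _ r' _ h => mul_le_mul_of_nonneg_right (hmono h) ENNReal.toReal_nonneg
  · simpa only [smul_eq_mul, mul_comm] using
      hconc.smul (ENNReal.toReal_nonneg (a := μ Set.univ))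

/-- Rescaling the admissible portfolios to `portfolioSet d`. -/
lemma exists_surjective_admissible {q r : ℝ} (hq : 0 < q) (hr : q ≤ r) :
    ∃ φ : portfolioSet d → {a : Fin d → ℝ // (∀ i, 0 ≤ a i) ∧ ∑ i, a i ≤ 1 - q / r},
      Function.Surjective φ ∧ ∀ s i, r * (φ s : Fin d → ℝ) i = (r - q) * (s : Fin d → ℝ) i := by
  have hr0 : 0 < r := hq.trans_le hr
  have hc : 0 ≤ (r - q) / r := div_nonneg (sub_nonneg.2 hr) hr0.le
  have hce : 1 - q / r = (r - q) / r := by field_simp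
  rw [hce]
  refine ⟨fun s => ⟨fun i => (r - q) / r * (s : Fin d → ℝ) i,
    fun i => mul_nonneg hc (s.2.1 i), ?_⟩, ?_, fun s i => ?_⟩
  · rw [← Finset.mul_sum]
    exact mul_le_of_le_one_right hc s.2.2
  · rintro ⟨a, ha0, ha1⟩
    rcases hc.eq_or_lt with h | h
    · refine ⟨⟨0, zero_mem_portfolioSet⟩, Subtype.ext (funext fun i => ?_)⟩
      have := Finset.single_le_sum (fun j _ => ha0 j) (Finset.mem_univ i)
      simp only [Pi.zero_apply, mul_zero]
      linarith [ha0 i]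
    · refine ⟨⟨fun i => a i / ((r - q) / r), fun i => div_nonneg (ha0 i) hc, ?_⟩,
        Subtype.ext (funext fun i => mul_div_cancel₀ _ h.ne')⟩
      rw [← Finset.sum_div]
      exact (div_le_one h).2 ha1
  · simp only
    field_simp

end ReducedDynamicProgramming

/-- the reduced value functions `w_k` (with `U` concave and nondecreasing)
are concave in the ratio variable `r ∈ [q,1]`. -/
theorem stmt11 (d N : ℕ) (q : ℝ) (hq : q ∈ Set.Ioo (0 : ℝ) 1)
    (U : ℝ → ℝ) (hU : MonotoneOn U (Set.Ioi (0 : ℝ))) (hUconc : ConcaveOn ℝ (Set.Ioi (0 : ℝ)) U)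
    (g : (Fin d → ℝ) → ℝ) (hg : ∀ r, 0 < g r) (hg_meas : Measurable g)
    (ν : Measure (Fin d → ℝ)) [IsProbabilityMeasure ν]
    (hν : ν = (volume : Measure (Fin d → ℝ)).withDensity fun r => ENNReal.ofReal (g r))
    (w : ℕ → ℝ → Measure (Fin d → ℝ) → ℝ)
    (hwN : ∀ r : ℝ, ∀ μ : Measure (Fin d → ℝ), w N r μ = U r * (μ Set.univ).toReal)
    (hrec : ∀ k < N, ∀ r ∈ Set.Icc q 1, ∀ μ : Measure (Fin d → ℝ), IsFiniteMeasure μ →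
      w k r μ = ⨆ a : {a : Fin d → ℝ // (∀ i, 0 ≤ a i) ∧ ∑ i, a i ≤ 1 - q / r},
        ∫ x, w (k + 1)
            (min 1 (r * (1 + ∑ i, (a : Fin d → ℝ) i * (Real.exp (x i) - 1))))
            (μ.withDensity fun b => ENNReal.ofReal (g (x - b) / g x)) ∂ν) :
    ∀ k ≤ N, ∀ μ : Measure (Fin d → ℝ), IsFiniteMeasure μ →
      ∀ r1 ∈ Set.Icc q 1, ∀ r2 ∈ Set.Icc q 1, ∀ lam ∈ Set.Ioo (0 : ℝ) 1,
        lam * w k r1 μ + (1 - lam) * w k r2 μ ≤ w k (lam * r1 + (1 - lam) * r2) μ := by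
  suffices h : ∀ k ≤ N, ∃ F, IsRegularValue q F ∧ ∀ μ : Measure (Fin d → ℝ), IsFiniteMeasure μ →
      ∀ r ∈ Set.Icc q 1, w k r μ = F r μ by
    intro k hk μ hμ r₁ h₁ r₂ h₂ lam hlam
    obtain ⟨F, hF, hwF⟩ := h k hk
    have hlam' : 0 ≤ 1 - lam := sub_nonneg.2 hlam.2.le
    have hmem : lam * r₁ + (1 - lam) * r₂ ∈ Set.Icc q 1 :=
      convex_Icc q 1 h₁ h₂ hlam.1.le hlam' (by ring)
    rw [hwF μ hμ r₁ h₁, hwF μ hμ r₂ h₂, hwF μ hμ _ hmem]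
    exact (hF.concaveOn_ratio μ).2 h₁.1 h₂.1 hlam.1.le hlam' (by ring)
  intro k hk
  induction hk using Nat.decreasingInduction with
  | self =>
    refine ⟨_, isRegularValue_terminal hq hU hUconc, fun μ _ r hr => ?_⟩
    rw [hwN, min_eq_right hr.2, max_eq_right hr.1]
  | of_succ k hk ih =>
    obtain ⟨F, hF, hwF⟩ := ih
    refine ⟨_, hF.bellman hq.2.le hg hg_meas hν, fun μ hμ r hr => ?_⟩
    obtain ⟨φ, hφ, hφs⟩ := exists_surjective_admissible (d := d) hq.1 hr.1
    rw [hrec k hk r hr μ hμ, bellman, if_pos hμ, sSup_image']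
    refine (hφ.iSup_congr φ fun s => integral_congr_ae ?_).symm
    filter_upwards [ae_isFiniteMeasure_posterior hg hg_meas hν μ] with x hx
    have hratio : min 1 (r * (1 + ∑ i, (φ s : Fin d → ℝ) i * (Real.exp (x i) - 1))) =
        nextRatio q r s x := by
      have e : r * (1 + ∑ i, (φ s : Fin d → ℝ) i * (Real.exp (x i) - 1)) =
          r + ∑ i, ((r - q) * (s : Fin d → ℝ) i) * (Real.exp (x i) - 1) := by
        simp only [mul_add, mul_one, Finset.mul_sum, ← mul_assoc, hφs]
      rw [nextRatio, excess_mul_growth, e]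
      congr 1
      ring
    rw [hratio]
    exact hwF _ hx _ ⟨le_nextRatio hq.2.le hr.1 s.2 x, min_le_left _ _⟩
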